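/- For every rational number t, the number (t² − 2)(t² − 3) is not the square of a rational number. -/

import Mathlib

/-!
Write `t = p / q` in lowest terms. The integers `p² - 2q²` and `p² - 3q²` are coprime and their
product is a square, so each is a square up to sign. The sign `p² - 3q² = -b²` is impossible
modulo `3`, and `p² - 2q² = -a²`, `p² - 3q² = b²` would give `q² = -a² - b²`. There remains
`a² = b² + q²`, `p² = a² + 2q²`, which `descent` excludes for `q ≠ 0` by infinite descent on `|q|`.

For the descent, parametrize `b = m² - n²`, `q = 2mn`, `a = m² + n²`. The two halves of
`(p - a)(p + a) = 8m²n²` are coprime, hence of the form `2u²`, `v²` with `uv = mn`, and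
`m² + n² = v² - 2u²` (`exists_uv`). Refining `mn = uv` to `m = αβ`, `n = γδ`, `u = αγ`, `v = βδ`
turns this into `β²(δ² - α²) = γ²(δ² + 2α²)`, so that `δ² - α² = kγ²` and `δ² + 2α² = kβ²` with
`k ∣ 3`. For `k = 1` the quadruple `(b, q, a, p) = (γ, α, δ, β)` solves the original system, and for
`k = 3` the quadruple `(α, γ, β, δ)` does; since `q = 2αβγδ`, both are smaller.
-/

lemma eq_sq_of_coprime_mul {x y w : ℤ} (hx : 0 ≤ x) (h : IsCoprime x y) (e : x * y = w ^ 2) :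
    ∃ u, x = u ^ 2 := by
  obtain ⟨u, hu | hu⟩ := Int.sq_of_isCoprime h e
  · exact ⟨u, hu⟩
  · exact ⟨0, by nlinarith [sq_nonneg u]⟩

lemma sq_emod_four (x : ℤ) : x % 2 = 0 ∧ x ^ 2 % 4 = 0 ∨ x % 2 = 1 ∧ x ^ 2 % 4 = 1 := by
  rcases Int.emod_two_eq_zero_or_one x with h | h
  · left
    refine ⟨h, ?_⟩
    obtain ⟨k, rfl⟩ : ∃ k, x = 2 * k := ⟨x / 2, by omega⟩
    ring_nf
    omega
  · right
    refine ⟨h, ?_⟩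
    obtain ⟨k, rfl⟩ : ∃ k, x = 2 * k + 1 := ⟨x / 2, by omega⟩
    ring_nf
    omega

lemma not_both_even {x y : ℤ} (h : IsCoprime x y) : ¬ (x % 2 = 0 ∧ y % 2 = 0) := by
  rintro ⟨hx, hy⟩
  have := h.isUnit_of_dvd' (Int.dvd_of_emod_eq_zero hx) (Int.dvd_of_emod_eq_zero hy)
  rw [Int.isUnit_iff] at this
  omega

/-- The factorization of `p² - (m² + n²)² = 8m²n²`. The sign of `v² - 2u²` is determined modulo `4`,
as `m² + n² ≡ 1`. -/
lemma exists_uv {m n p : ℤ} (hmn : IsCoprime m n)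
    (hpar : m % 2 = 0 ∧ n % 2 = 1 ∨ m % 2 = 1 ∧ n % 2 = 0) (hp : 0 ≤ p)
    (h : p ^ 2 = (m ^ 2 + n ^ 2) ^ 2 + 8 * (m * n) ^ 2) :
    ∃ u v : ℤ, m * n = u * v ∧ m ^ 2 + n ^ 2 = v ^ 2 - 2 * u ^ 2 := by
  obtain ⟨a, ha⟩ : ∃ a, a = m ^ 2 + n ^ 2 := ⟨_, rfl⟩
  have ha0 : 0 ≤ a := by rw [ha]; positivity
  have ha4 : a % 4 = 1 := by
    rcases sq_emod_four m with hm | hm <;> rcases sq_emod_four n with hn | hn <;> omega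
  have hw2 : (m * n) % 2 = 0 := by
    rcases hpar with hm | hm <;> simp [Int.mul_emod, hm.1, hm.2]
  obtain ⟨w, hw⟩ : ∃ w, w = m * n := ⟨_, rfl⟩
  rw [← hw, ← ha] at h
  rw [← hw, ← ha]
  rw [← hw] at hw2
  have cop_aw : IsCoprime a w := by
    rw [hw, ha]
    refine IsCoprime.mul_right ?_ ?_
    · have : IsCoprime (n ^ 2) m := hmn.symm.pow_left
      simpa [sq, add_comm] using this.add_mul_left_left m
    · have : IsCoprime (m ^ 2) n := hmn.pow_left
      simpa [sq] using this.add_mul_left_left n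
  have cop_a8 : IsCoprime a 8 := by
    have h2 : IsCoprime a 2 := ⟨1, -(a / 2), by omega⟩
    have := h2.pow_right (n := 3)
    norm_num at this
    exact this
  have cop_ap : IsCoprime a p := by
    have h1 : IsCoprime a (8 * w ^ 2) := cop_a8.mul_right cop_aw.pow_right
    have h2 : IsCoprime a (p ^ 2) := by
      rw [h, show a ^ 2 + 8 * w ^ 2 = 8 * w ^ 2 + a * a by ring]
      exact h1.add_mul_left_right a
    exact (IsCoprime.pow_right_iff (by norm_num)).1 h2
  have hp2 : p % 2 = 1 := by
    have := sq_emod_four p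
    have := sq_emod_four a
    omega
  obtain ⟨X, hX⟩ : ∃ X, p = a + 2 * X := ⟨(p - a) / 2, by omega⟩
  obtain ⟨Y, hY⟩ : ∃ Y, Y = X + a := ⟨_, rfl⟩
  have hXY : X * Y = 2 * w ^ 2 := by
    rw [hX] at h
    rw [hY]
    linarith
  have hX0 : 0 ≤ X := by nlinarith [sq_nonneg w]
  have hY0 : 0 ≤ Y := by omega
  have cop : IsCoprime X Y := by
    obtain ⟨c, d, e⟩ := cop_ap
    refine ⟨d - c, c + d, ?_⟩
    rw [hX] at e
    rw [hY]
    linarith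
  have heven : (2 : ℤ) ∣ X ∨ (2 : ℤ) ∣ Y :=
    Int.prime_two.dvd_mul.1 ⟨w ^ 2, hXY⟩
  -- `w = ± u v` is turned into `w = u v` by changing the sign of `v`.
  have fin : ∀ u v : ℤ, w ^ 2 = u ^ 2 * v ^ 2 → a = v ^ 2 - 2 * u ^ 2 →
      ∃ u v : ℤ, w = u * v ∧ a = v ^ 2 - 2 * u ^ 2 := by
    intro u v h1 h2
    rw [← mul_pow] at h1
    rcases sq_eq_sq_iff_eq_or_eq_neg.1 h1 with h1 | h1
    · exact ⟨u, v, h1, h2⟩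
    · exact ⟨u, -v, by rw [h1]; ring, by rw [h2]; ring⟩
  rcases heven with ⟨Z, hZ⟩ | ⟨Z, hZ⟩
  · have c : IsCoprime Z Y := by
      rw [hZ] at cop
      exact cop.of_mul_left_right
    have e : Z * Y = w ^ 2 := by rw [hZ] at hXY; linarith
    obtain ⟨u, hu⟩ := eq_sq_of_coprime_mul (by omega) c e
    obtain ⟨v, hv⟩ := eq_sq_of_coprime_mul hY0 c.symm (by rw [mul_comm]; exact e)
    exact fin u v (by rw [← e, hu, hv]) (by omega)
  · have c : IsCoprime X Z := by
      rw [hZ] at cop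
      exact cop.of_mul_right_right
    have e : X * Z = w ^ 2 := by rw [hZ] at hXY; linarith
    obtain ⟨v, hv⟩ := eq_sq_of_coprime_mul hX0 c e
    obtain ⟨u, hu⟩ := eq_sq_of_coprime_mul (by omega) c.symm (by rw [mul_comm]; exact e)
    exfalso
    -- Here `a = 2u² - v²` with `uv = ± w` even, which is incompatible with `a ≡ 1` modulo `4`.
    have hev : (2 : ℤ) ∣ v * u := by
      have : (2 : ℤ) ∣ (v * u) ^ 2 := by
        rw [mul_pow, ← hv, ← hu, e]
        exact (Int.dvd_of_emod_eq_zero hw2).trans (dvd_pow_self w two_ne_zero)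
      exact Int.prime_two.dvd_of_dvd_pow this
    have hu4 := sq_emod_four u
    have hv4 := sq_emod_four v
    rcases Int.prime_two.dvd_mul.1 hev with hd | hd <;> omega

/-- `b²`, `b² + q²`, `b² + 3q²` are never all squares for coprime `b`, `q` with `q ≠ 0`; the number `N`
is the size of `q` and carries the induction. -/
lemma descent (N : ℕ) : ∀ b q a p : ℤ, q.natAbs = N → IsCoprime b q → a ^ 2 = b ^ 2 + q ^ 2 →
    p ^ 2 = a ^ 2 + 2 * q ^ 2 → q = 0 := by
  induction N using Nat.strong_induction_on with
  | _ N ih =>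
  intro b q a p hN cop h1 h2
  by_contra hq
  wlog ha : 0 ≤ a generalizing a
  · exact this (-a) (by rw [neg_sq, h1]) (by rw [neg_sq, h2]) (by omega)
  wlog hp : 0 ≤ p generalizing p
  · exact this (-p) (by rw [neg_sq, h2]) (by omega)
  have hqpos : 0 < q ^ 2 := by positivity
  have hapos : 0 < a := by
    rcases ha.lt_or_eq with h | h
    · exact h
    · subst h
      nlinarith [sq_nonneg b]
  have hb : b % 2 = 1 := by
    have := not_both_even cop
    have := sq_emod_four b
    have := sq_emod_four q
    have := sq_emod_four p
    omega
  have hpt : PythagoreanTriple b q a := by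
    unfold PythagoreanTriple
    linarith
  obtain ⟨m, n, hbm, hqm, ham, hmn, hpar, -⟩ :=
    hpt.coprime_classification' (Int.isCoprime_iff_gcd_eq_one.1 cop) hb hapos
  have hmn' := Int.isCoprime_iff_gcd_eq_one.2 hmn
  obtain ⟨u, v, huv, hs⟩ := exists_uv hmn' hpar hp (by rw [h2, ham, hqm]; ring)
  obtain ⟨α, β, ⟨γ, hu⟩, ⟨δ, hv⟩, hm⟩ := exists_dvd_and_dvd_of_dvd_mul (Dvd.intro n huv)
  have hm0 : α * β ≠ 0 := by
    rintro h
    apply hq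
    rw [hqm, hm, h]
    ring
  have hn : n = γ * δ := by
    apply mul_left_cancel₀ hm0
    rw [← hm, huv, hu, hv, hm]
    ring
  subst hu hv hm hn
  have hα : α ≠ 0 := by rintro rfl; simp at hm0
  have hβ : β ≠ 0 := by rintro rfl; simp at hm0
  have hγ : γ ≠ 0 := by rintro rfl; simp at hqm; exact hq hqm
  have hδ : δ ≠ 0 := by rintro rfl; simp at hqm; exact hq hqm
  have cβγ : IsCoprime β γ := hmn'.of_mul_left_right.of_mul_right_left
  have cαδ : IsCoprime α δ := hmn'.of_mul_left_left.of_mul_right_right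
  have key : β ^ 2 * (δ ^ 2 - α ^ 2) = γ ^ 2 * (δ ^ 2 + 2 * α ^ 2) := by linarith
  have hdvd : γ ^ 2 ∣ δ ^ 2 - α ^ 2 :=
    (cβγ.symm.pow (m := 2) (n := 2)).dvd_of_dvd_mul_left ⟨_, key⟩
  obtain ⟨k, hk⟩ := hdvd
  have hk' : δ ^ 2 + 2 * α ^ 2 = k * β ^ 2 := by
    apply mul_left_cancel₀ (pow_ne_zero 2 hγ)
    rw [← key, hk]
    ring
  have hkpos : 0 < k := by
    have h3 : 0 < k * β ^ 2 := by rw [← hk']; positivity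
    exact pos_of_mul_pos_left h3 (sq_nonneg β)
  have hk3 : k ∣ 3 := by
    obtain ⟨x, y, e⟩ := cαδ.pow (m := 2) (n := 2)
    refine ⟨x * (β ^ 2 - γ ^ 2) + y * (2 * γ ^ 2 + β ^ 2), ?_⟩
    linear_combination (-3) * e + (2 * y - x) * hk + (x + y) * hk'
  have small : ∀ x c : ℤ, x ≠ 0 → q = 2 * (x * c) → x.natAbs < N := by
    intro x c hx hc
    have hc0 : c ≠ 0 := by
      rintro rfl
      exact hq (by rw [hc]; ring)
    rw [← hN, hc, Int.natAbs_mul, Int.natAbs_mul]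
    have := Int.natAbs_pos.2 hx
    have := Nat.le_mul_of_pos_right x.natAbs (Int.natAbs_pos.2 hc0)
    norm_num
    omega
  have hk13 : k = 1 ∨ k = 3 := by
    have := Int.le_of_dvd (by norm_num) hk3
    interval_cases k
    · simp
    · norm_num at hk3
    · simp
  rcases hk13 with rfl | rfl
  · refine hα (ih _ (small α (β * γ * δ) hα (by rw [hqm]; ring)) γ α δ β rfl ?_
      (by linarith) (by linarith))
    have h3 : IsCoprime (γ ^ 2) α := by
      have h4 : IsCoprime (δ ^ 2) α := cαδ.symm.pow_left
      have h5 := h4.add_mul_left_left (-α)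
      rwa [show δ ^ 2 + α * -α = γ ^ 2 by linarith] at h5
    exact (IsCoprime.pow_left_iff (by norm_num)).1 h3
  · refine hγ (ih _ (small γ (α * β * δ) hγ (by rw [hqm]; ring)) α γ β δ rfl ?_
      (by linarith) (by linarith))
    have h3 : IsCoprime (α ^ 2) γ := by
      have h4 : IsCoprime (β ^ 2) γ := cβγ.pow_left
      have h5 := h4.add_mul_left_left (-γ)
      rwa [show β ^ 2 + γ * -γ = α ^ 2 by linarith] at h5
    exact (IsCoprime.pow_left_iff (by norm_num)).1 h3

lemma three_dvd_of_sq_add_sq {x y : ℤ} (h : (3 : ℤ) ∣ x ^ 2 + y ^ 2) : (3 : ℤ) ∣ x ∧ (3 : ℤ) ∣ y := by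
  have h0 := Int.emod_eq_zero_of_dvd h
  have hx : x % 3 = 0 ∨ x % 3 = 1 ∨ x % 3 = 2 := by omega
  have hy : y % 3 = 0 ∨ y % 3 = 1 ∨ y % 3 = 2 := by omega
  rcases hx with hx | hx | hx <;> rcases hy with hy | hy | hy <;>
    simp [sq, Int.add_emod, Int.mul_emod, hx, hy] at h0 <;> omega

lemma no_integer_solution {p q r : ℤ} (cop : IsCoprime p q) (hq : q ≠ 0) :
    (p ^ 2 - 2 * q ^ 2) * (p ^ 2 - 3 * q ^ 2) ≠ r ^ 2 := by
  intro h
  have cq : ∀ c : ℤ, IsCoprime (p ^ 2 - c * q ^ 2) q := by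
    intro c
    have h1 : IsCoprime (p ^ 2) q := cop.pow_left
    have h2 := h1.add_mul_left_left (-(c * q))
    rwa [show p ^ 2 + q * -(c * q) = p ^ 2 - c * q ^ 2 by ring] at h2
  have cAB : IsCoprime (p ^ 2 - 2 * q ^ 2) (p ^ 2 - 3 * q ^ 2) := by
    obtain ⟨x, y, e⟩ := (cq 2).pow_right (n := 2)
    exact ⟨x + y, -y, by linear_combination e⟩
  obtain ⟨b, hb | hb⟩ := Int.sq_of_isCoprime cAB.symm (by rw [mul_comm]; exact h)
  · obtain ⟨a, ha | ha⟩ := Int.sq_of_isCoprime cAB h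
    · refine hq (descent _ b q a p rfl ?_ (by linarith) (by linarith))
      have h3 := cq 3
      rw [hb] at h3
      exact (IsCoprime.pow_left_iff (by norm_num)).1 h3
    · have : 0 < q ^ 2 := by positivity
      nlinarith [sq_nonneg a, sq_nonneg b]
  · obtain ⟨⟨x, hx⟩, ⟨y, hy⟩⟩ :=
      three_dvd_of_sq_add_sq (x := p) (y := b) ⟨q ^ 2, by linarith⟩
    have h3q : (3 : ℤ) ∣ q := by
      refine Int.prime_three.dvd_of_dvd_pow (n := 2) ⟨x ^ 2 + y ^ 2, ?_⟩
      rw [hx, hy] at hb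
      linarith
    have := cop.isUnit_of_dvd' ⟨x, hx⟩ h3q
    rw [Int.isUnit_iff] at this
    omega

theorem stmt_2 (t s : ℚ) : s ^ 2 ≠ (t ^ 2 - 2) * (t ^ 2 - 3) := by
  intro h
  have hq : (t.den : ℚ) ≠ 0 := by exact_mod_cast t.den_nz
  have ht : t * t.den = t.num := Rat.mul_den_eq_num t
  have hsq : IsSquare ((((t.num ^ 2 - 2 * (t.den : ℤ) ^ 2) *
      (t.num ^ 2 - 3 * (t.den : ℤ) ^ 2) : ℤ)) : ℚ) := by
    refine ⟨s * t.den ^ 2, ?_⟩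
    push_cast
    rw [← ht]
    linear_combination (-(t.den : ℚ) ^ 4) * h
  rw [Rat.isSquare_intCast_iff] at hsq
  obtain ⟨r, hr⟩ := hsq
  refine no_integer_solution (p := t.num) (q := t.den) (r := r) ?_ ?_ (by rw [hr, sq])
  · exact Rat.isCoprime_num_den t
  · exact_mod_cast t.den_nz
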